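/- arXiv:2502.13654 — 2 statements merged into one kernel-verified Lean document; each statement's English description precedes it below -/
import Mathlib

section
/- Given a graph G = (V, E), the collection of subsets F ⊆ V such that the induced subgraph G[F] has a perfect matching forms the feasible sets of a delta-matroid (the matching delta-matroid of G). -/
open scoped symmDiff

/-- A (finite) delta-matroid given by its family of feasible sets:
a nonempty family satisfying the symmetric exchange axiom. -/
def IsDeltaMatroid {α : Type*} [DecidableEq α] (𝓕 : Set (Finset α)) : Prop :=
  𝓕.Nonempty ∧
    ∀ A ∈ 𝓕, ∀ B ∈ 𝓕, ∀ x ∈ A ∆ B, ∃ y ∈ A ∆ B, A ∆ ({x, y} : Finset α) ∈ 𝓕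

/-!
Let `M` and `N` be matchings covering exactly `A` and `B`, and let `C` be the component of
`x ∈ A ∆ B` in the graph `M ∪ N`. Inside `C` every vertex has degree at most `2`, and at most `1`
if it lies in `A ∆ B`; since a connected graph on `C` has at least `|C| - 1` edges, `C` contains at
most two vertices of `A ∆ B`. Their number is even, as `A ∩ C` and `B ∩ C` are both even, so
`(A ∆ B) ∩ C = {x, y}`. Replacing `M` by `N` inside `C` yields a matching covering exactly
`A ∆ {x, y}`.
-/

open SimpleGraph Subgraph

section Set

variable {α : Type*} {A B C : Set α} {x : α}

theorem sum_coe_indicator_one_eq_ncard_inter [Fintype C] :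
    ∑ v : C, A.indicator (1 : α → ℕ) v = (A ∩ C).ncard := by
  classical
  have hinter : A ∩ C = ({v ∈ C.toFinset | v ∈ A} : Finset α) := by
    ext v
    simp [and_comm]
  rw [Finset.sum_set_coe (f := A.indicator 1), hinter, Set.ncard_coe_finset, Finset.card_filter]
  simp only [Set.indicator_apply, Pi.one_apply]

theorem ncard_symmDiff_add_ncard_add_ncard (hA : A.Finite) (hB : B.Finite) :
    (A ∆ B).ncard + (A.ncard + B.ncard) = 2 * (A ∪ B).ncard := by
  have hunion := Set.ncard_union_add_ncard_inter A B hA hB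
  have hdiff := Set.ncard_sdiff_add_ncard_of_subset
    (Set.inter_subset_left.trans Set.subset_union_left : A ∩ B ⊆ A ∪ B) (hA.union hB)
  have hsymm : A ∆ B = (A ∪ B) \ (A ∩ B) := symmDiff_eq_sup_sdiff_inf A B
  rw [hsymm]
  lia

theorem exists_eq_pair_of_mem_of_ncard_eq_two (hx : x ∈ A) (hA : A.ncard = 2) :
    ∃ y, A = {x, y} := by
  obtain ⟨a, b, -, rfl⟩ := Set.ncard_eq_two.mp hA
  obtain rfl | rfl := hx
  · exact ⟨b, rfl⟩
  · exact ⟨a, Set.pair_comm a x⟩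

end Set

section Graph

variable {V : Type*} {G : SimpleGraph V} {M N : G.Subgraph} {A B C : Set V} {x : V}

/-- `S` is the set of vertices covered by some matching of `G`. The matching is taken in `G` rather
than in `G.induce S`, so that matchings covering different sets can be combined. -/
def IsMatchable (G : SimpleGraph V) (S : Set V) : Prop :=
  ∃ M : G.Subgraph, M.IsMatching ∧ M.verts = S

theorem isMatchable_iff_exists_isPerfectMatching_induce :
    IsMatchable G A ↔ ∃ M : (G.induce A).Subgraph, M.IsPerfectMatching := by
  constructor
  · rintro ⟨M, hM, rfl⟩
    refine ⟨M.comap (Embedding.induce M.verts).toHom, isPerfectMatching_iff.mpr ?_⟩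
    rintro ⟨v, hv⟩
    obtain ⟨w, hvw, hw⟩ := hM hv
    exact ⟨⟨w, M.edge_vert hvw.symm⟩, ⟨hvw.adj_sub, hvw⟩, fun u hu => Subtype.ext (hw u hu.2)⟩
  · rintro ⟨M, hM, hspan⟩
    exact ⟨M.map (Embedding.induce A).toHom, hM.map _ Subtype.val_injective,
      by rw [map_verts, hspan.verts_eq_univ, Set.image_univ]; exact Subtype.range_coe⟩

theorem isMatchable_empty : IsMatchable G ∅ :=
  ⟨⊥, fun _ hv => hv.elim, verts_bot⟩

theorem isMatching_induce_inter (hM : M.IsMatching)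
    (hC : ∀ ⦃u v⦄, M.Adj u v → (u ∈ C ↔ v ∈ C)) : (M.induce (M.verts ∩ C)).IsMatching := by
  rintro v ⟨hv, hvC⟩
  obtain ⟨w, hvw, hw⟩ := hM hv
  exact ⟨w, ⟨⟨hv, hvC⟩, ⟨M.edge_vert hvw.symm, (hC hvw).mp hvC⟩, hvw⟩, fun u hu => hw u hu.2.2⟩

theorem isMatchable_ite_verts (hM : M.IsMatching) (hN : N.IsMatching)
    (hMC : ∀ ⦃u v⦄, M.Adj u v → (u ∈ C ↔ v ∈ C)) (hNC : ∀ ⦃u v⦄, N.Adj u v → (u ∈ C ↔ v ∈ C)) :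
    IsMatchable G (C.ite N.verts M.verts) := by
  have hN_inside := isMatching_induce_inter hN hNC
  have hM_outside : (M.induce (M.verts ∩ Cᶜ)).IsMatching :=
    isMatching_induce_inter hM fun _ _ h => not_congr (hMC h)
  refine ⟨_, hN_inside.sup hM_outside ?_, rfl⟩
  rw [hN_inside.support_eq_verts, hM_outside.support_eq_verts]
  exact disjoint_compl_right.mono Set.inter_subset_right Set.inter_subset_right

theorem even_ncard_verts (hM : M.IsMatching) (hfin : M.verts.Finite) : Even M.verts.ncard := by
  have := hfin.fintype
  rw [Set.ncard_eq_toFinset_card']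
  exact hM.even_card

theorem ncard_neighborSet_eq_indicator (hM : M.IsMatching) (v : V) :
    (M.neighborSet v).ncard = M.verts.indicator 1 v := by
  by_cases hv : v ∈ M.verts
  · rw [Set.indicator_of_mem hv, Pi.one_apply, Set.ncard_eq_one]
    obtain ⟨w, hvw, hw⟩ := hM hv
    exact ⟨w, Set.eq_singleton_iff_unique_mem.mpr ⟨hvw, hw⟩⟩
  · have hempty : M.neighborSet v = ∅ :=
      Set.eq_empty_of_forall_notMem fun _ h => hv (M.edge_vert h)
    rw [Set.indicator_of_notMem hv, hempty, Set.ncard_empty]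

theorem two_mul_card_le_sum_degrees_add_two [Fintype V] [DecidableRel G.Adj] (hG : G.Connected) :
    2 * Fintype.card V ≤ ∑ v, G.degree v + 2 := by
  have hcard := hG.card_vert_le_card_edgeSet_add_one
  rw [Nat.card_eq_fintype_card, Nat.card_eq_fintype_card, ← edgeFinset_card] at hcard
  rw [G.sum_degrees_eq_twice_card_edges]
  lia

theorem degree_toSimpleGraph_le (hM : M.IsMatching) (hN : N.IsMatching)
    (c : (M ⊔ N).spanningCoe.ConnectedComponent) (v : c) [Fintype (c.toSimpleGraph.neighborSet v)] :
    c.toSimpleGraph.degree v ≤ M.verts.indicator 1 (v : V) + N.verts.indicator 1 (v : V) := by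
  have hunion :
      Subtype.val '' c.toSimpleGraph.neighborSet v ⊆ M.neighborSet v ∪ N.neighborSet v := by
    rintro _ ⟨w, hvw, rfl⟩
    exact hvw
  have hfin : (M.neighborSet (v : V) ∪ N.neighborSet v).Finite :=
    Set.Finite.union (Set.Subsingleton.finite fun _ h _ h' => hM.eq_of_adj_left h h')
      (Set.Subsingleton.finite fun _ h _ h' => hN.eq_of_adj_left h h')
  calc c.toSimpleGraph.degree v
    _ = (Subtype.val '' c.toSimpleGraph.neighborSet v).ncard := by
      rw [Set.ncard_image_of_injective _ Subtype.val_injective, Set.ncard_eq_toFinset_card',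
        Set.toFinset_card, card_neighborSet_eq_degree]
    _ ≤ (M.neighborSet (v : V) ∪ N.neighborSet v).ncard := Set.ncard_le_ncard hunion hfin
    _ ≤ (M.neighborSet v).ncard + (N.neighborSet v).ncard := Set.ncard_union_le _ _
    _ = M.verts.indicator 1 (v : V) + N.verts.indicator 1 (v : V) := by
      rw [ncard_neighborSet_eq_indicator hM, ncard_neighborSet_eq_indicator hN]

theorem two_mul_ncard_supp_le (hM : M.IsMatching) (hN : N.IsMatching)
    (c : (M ⊔ N).spanningCoe.ConnectedComponent) (hfin : c.supp.Finite) :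
    2 * c.supp.ncard ≤ (M.verts ∩ c.supp).ncard + (N.verts ∩ c.supp).ncard + 2 := by
  classical
  have : Fintype c := hfin.fintype
  calc 2 * c.supp.ncard = 2 * Fintype.card c := by rw [← Nat.card_eq_fintype_card]; rfl
    _ ≤ ∑ v : c, c.toSimpleGraph.degree v + 2 :=
      two_mul_card_le_sum_degrees_add_two c.connected_toSimpleGraph
    _ ≤ ∑ v : c, (M.verts.indicator 1 (v : V) + N.verts.indicator 1 (v : V)) + 2 := by
      gcongr with v
      exact degree_toSimpleGraph_le hM hN c v
    _ = (M.verts ∩ c.supp).ncard + (N.verts ∩ c.supp).ncard + 2 := by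
      rw [Finset.sum_add_distrib]
      congr 2 <;> exact sum_coe_indicator_one_eq_ncard_inter

theorem supp_spanningCoe_subset_verts {K : G.Subgraph} (hx : x ∈ K.verts) :
    (K.spanningCoe.connectedComponentMk x).supp ⊆ K.verts := by
  intro v hv
  obtain rfl | hvx := eq_or_ne v x
  · exact hx
  · obtain ⟨w, hvw⟩ := mem_support_of_reachable hvx (ConnectedComponent.exact hv)
    exact K.edge_vert hvw

theorem ncard_symmDiff_verts_inter_supp (hM : M.IsMatching) (hN : N.IsMatching)
    (hMfin : M.verts.Finite) (hNfin : N.verts.Finite) (hx : x ∈ M.verts ∆ N.verts) :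
    ((M.verts ∆ N.verts) ∩ ((M ⊔ N).spanningCoe.connectedComponentMk x).supp).ncard = 2 := by
  set c := (M ⊔ N).spanningCoe.connectedComponentMk x
  have hxMN : x ∈ (M ⊔ N).verts := hx.imp And.left And.left
  have hsupp : c.supp ⊆ M.verts ∪ N.verts := supp_spanningCoe_subset_verts hxMN
  have hMc := hMfin.inter_of_left c.supp
  have hNc := hNfin.inter_of_left c.supp
  have hcount := ncard_symmDiff_add_ncard_add_ncard hMc hNc
  rw [← Set.inter_symmDiff_distrib_right, ← Set.union_inter_distrib_right,
    Set.inter_eq_right.mpr hsupp] at hcount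
  have hconn := two_mul_ncard_supp_le hM hN c ((hMfin.union hNfin).subset hsupp)
  have hle : ((M.verts ∆ N.verts) ∩ c.supp).ncard ≤ 2 := by lia
  have hMeven : Even (M.verts ∩ c.supp).ncard :=
    even_ncard_verts (isMatching_induce_inter hM fun _ _ h => c.mem_supp_congr_adj (.inl h)) hMc
  have hNeven : Even (N.verts ∩ c.supp).ncard :=
    even_ncard_verts (isMatching_induce_inter hN fun _ _ h => c.mem_supp_congr_adj (.inr h)) hNc
  have heven : Even ((M.verts ∆ N.verts) ∩ c.supp).ncard :=
    (Nat.even_add.mp (hcount ▸ even_two_mul _)).mpr (hMeven.add hNeven)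
  have hpos : 0 < ((M.verts ∆ N.verts) ∩ c.supp).ncard :=
    (Set.ncard_pos ((hMfin.symmDiff hNfin).inter_of_left _)).mpr ⟨x, hx, rfl⟩
  exact le_antisymm hle (Nat.le_of_dvd hpos heven.two_dvd)

theorem IsMatchable.exists_symmDiff_pair (hA : IsMatchable G A) (hB : IsMatchable G B)
    (hAfin : A.Finite) (hBfin : B.Finite) (hx : x ∈ A ∆ B) :
    ∃ y ∈ A ∆ B, IsMatchable G (A ∆ {x, y}) := by
  obtain ⟨M, hM, rfl⟩ := hA
  obtain ⟨N, hN, rfl⟩ := hB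
  set c := (M ⊔ N).spanningCoe.connectedComponentMk x
  obtain ⟨y, hpair⟩ : ∃ y, (M.verts ∆ N.verts) ∩ c.supp = {x, y} :=
    exists_eq_pair_of_mem_of_ncard_eq_two ⟨hx, rfl⟩
      (ncard_symmDiff_verts_inter_supp hM hN hAfin hBfin hx)
  have hy : y ∈ (M.verts ∆ N.verts) ∩ c.supp := hpair ▸ Set.mem_insert_of_mem x rfl
  refine ⟨y, hy.1, ?_⟩
  have hswitch : c.supp.ite N.verts M.verts = M.verts ∆ {x, y} := by
    rw [← hpair]
    ext v
    simp only [Set.ite, Set.mem_symmDiff, Set.mem_union, Set.mem_inter_iff, Set.mem_sdiff]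
    tauto
  rw [← hswitch]
  exact isMatchable_ite_verts hM hN (fun _ _ h => c.mem_supp_congr_adj (.inl h))
    fun _ _ h => c.mem_supp_congr_adj (.inr h)

end Graph

theorem matching_isDeltaMatroid_general {V : Type*} [DecidableEq V] (G : SimpleGraph V) :
    IsDeltaMatroid {F : Finset V |
      ∃ M : (G.induce (↑F : Set V)).Subgraph, M.IsPerfectMatching} := by
  simp only [← isMatchable_iff_exists_isPerfectMatching_induce]
  refine ⟨⟨∅, ?_⟩, fun A hA B hB x hx => ?_⟩
  · simpa using isMatchable_empty
  · obtain ⟨y, hy, hAxy⟩ := IsMatchable.exists_symmDiff_pair hA hB A.finite_toSet B.finite_toSet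
      (by exact_mod_cast hx)
    exact ⟨y, by exact_mod_cast hy, by simpa using hAxy⟩

/-- The sets of vertices inducing a subgraph with a perfect matching form the
feasible sets of a delta-matroid (the matching delta-matroid of `G`). -/
theorem matching_isDeltaMatroid {V : Type*} [Fintype V] [DecidableEq V]
    (G : SimpleGraph V) :
    IsDeltaMatroid {F : Finset V |
      ∃ M : (G.induce (↑F : Set V)).Subgraph, M.IsPerfectMatching} :=
  matching_isDeltaMatroid_general G
end

section
/- Pfaffian of a sum: for two skew-symmetric matrices A₁ and A₂, both indexed by a finite linearly ordered set V, Pf(A₁ + A₂) = Σ_{U ⊆ V} σ_U · Pf A₁[U] · Pf A₂[V \ U], where σ_U ∈ {1, -1} is the sign of the permutation sending 1, ..., |V| to the increasing enumeration of U followed by the increasing enumeration of V \ U, and Pf of an empty matrix is 1. -/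
open Matrix

open Matrix

/-- The Pfaffian of an `n × n` matrix (intended for skew-symmetric matrices),
defined as the signed sum over perfect matchings of the index set: each matching
is encoded by the permutation listing its pairs `(a₁,b₁),(a₂,b₂),…` with
`aᵢ < bᵢ` and `a₁ < a₂ < ⋯`. For odd `n` the Pfaffian is `0`. -/
noncomputable def pfaffian {n : ℕ} {K : Type*} [Field K]
    (A : Matrix (Fin n) (Fin n) K) : K :=
  if Even n then
    ∑ σ ∈ Finset.univ.filter (fun σ : Equiv.Perm (Fin n) =>
        (∀ i j : Fin n, (i : ℕ) % 2 = 0 → (j : ℕ) = (i : ℕ) + 1 → σ i < σ j) ∧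
        (∀ i j : Fin n, (i : ℕ) % 2 = 0 → (j : ℕ) % 2 = 0 → i < j → σ i < σ j)),
      ((Equiv.Perm.sign σ : ℤ) : K) *
        ∏ i : Fin n,
          (if h : (i : ℕ) % 2 = 0 ∧ (i : ℕ) + 1 < n then
            A (σ i) (σ ⟨(i : ℕ) + 1, h.2⟩) else 1)
  else 0

/-- The Pfaffian of the principal submatrix `A[U]`, read off in the order
induced by the linear order on the index type. -/
noncomputable def pfSub {ι K : Type*} [LinearOrder ι] [Field K]
    (A : Matrix ι ι K) (U : Finset ι) : K :=
  pfaffian (A.submatrix (fun i : Fin U.card => ((U.orderIsoOfFin rfl) i : ι))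
    (fun j : Fin U.card => ((U.orderIsoOfFin rfl) j : ι)))

/-- The permutation of `Fin N` sending `1, …, N` to the increasing enumeration
of `U` followed by the increasing enumeration of its complement. -/
noncomputable def splitPerm {N : ℕ} (U : Finset (Fin N)) : Equiv.Perm (Fin N) :=
  (((finCongr (by
        rw [Finset.card_add_card_compl, Fintype.card_fin] :
          U.card + Uᶜ.card = N).symm).trans
      finSumFinEquiv.symm).trans
    (Equiv.sumCongr (U.orderIsoOfFin rfl).toEquiv
      (Uᶜ.orderIsoOfFin rfl).toEquiv)).trans
    ((Equiv.sumCongr (Equiv.refl _)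
        (Equiv.subtypeEquivRight (fun x => Finset.mem_compl))).trans
      (Equiv.sumCompl (· ∈ U)))

/-!
Up to sign, the terms of `Pf A` are the products of the entries of `A` over the arcs of a perfect
matching, and the sign is `-1` to the number of crossings of arcs. Expanding the products of
entries of `A₁ + A₂` colours every arc with `1` or `2`. If `U` is the set of ends of the arcs of
colour `1`, then such a coloured matching is a perfect matching of `U` together with one of
`V \ U`, and it remains to count the crossings of arcs of different colours. Two arcs `a < b` and
`c < d` cross if and only if the number of inversions between `{a, b}` and `{c, d}` is odd, so the
total number of these crossings has the parity of the number of inversions between `U` and `V \ U`,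
which is the sign `σ_U`.
-/

section

open Equiv Finset

/-! ### Inversions and crossings -/

section Signs

variable {ι : Type*} [LinearOrder ι]

/-- The sign `-1` of an inversion, for `x` listed before `y`. -/
def inversionSign (x y : ι) : ℤˣ := if y < x then -1 else 1

/-- The sign `-1` of a crossing of the arcs `a < b` and `c < d` in which the arc `a < b` starts
first. Its value at `(c, d, a, b)` accounts for the crossings in which `c < d` starts first. -/
def crossingSign (a b c d : ι) : ℤˣ := if a < c ∧ c < b ∧ b < d then -1 else 1

theorem inversionSign_of_le {x y : ι} (h : x ≤ y) : inversionSign x y = 1 :=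
  if_neg h.not_gt

theorem crossingSign_of_le {a b c d : ι} (h : c ≤ a) : crossingSign a b c d = 1 :=
  if_neg fun hc ↦ hc.1.not_ge h

theorem inversionSign_arcs {a b c d : ι} (hab : a < b) (hcd : c < d)
    (hac : a ≠ c) (had : a ≠ d) (hbd : b ≠ d) :
    inversionSign a c * inversionSign a d * (inversionSign b c * inversionSign b d) =
      crossingSign a b c d * crossingSign c d a b := by
  unfold inversionSign crossingSign
  grind [Int.units_mul_self]

/-- The sign of the shuffle that lists the elements of `U` in increasing order, followed by those
of `V`. -/
def shuffleSign (U V : Finset ι) : ℤˣ := ∏ u ∈ U, ∏ v ∈ V, inversionSign u v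

theorem sign_eq_prod_inversionSign {n : ℕ} (σ : Perm (Fin n)) :
    Perm.sign σ = ∏ i, ∏ j, if i < j then inversionSign (σ i) (σ j) else 1 := by
  rw [Perm.sign_eq_prod_prod_Ioi]
  refine prod_congr rfl fun i _ ↦ ?_
  rw [← prod_filter, filter_lt_eq_Ioi]
  refine prod_congr rfl fun j hj ↦ ?_
  have hne : σ i ≠ σ j := σ.injective.ne (mem_Ioi.1 hj).ne
  rcases hne.lt_or_gt with h | h <;> simp [inversionSign, h, h.not_gt]

end Signs

/-! ### Matchings as involutions -/

section Matchings

theorem apply_apply_of_sq_eq_one {α : Type*} {f : Perm α} (hf : f ^ 2 = 1) (a : α) :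
    f (f a) = a := by
  rw [← Perm.mul_apply, ← sq, hf, Perm.one_apply]

section PerfectMatchings

variable {α : Type*} [DecidableEq α] [Fintype α]

/-- The perfect matchings of `U`, a matching being encoded as the involution that exchanges matched
elements and fixes everything outside `U`. -/
def perfectMatchings (U : Finset α) : Finset (Perm α) := {f | f ^ 2 = 1 ∧ f.support = U}

theorem mem_perfectMatchings {U : Finset α} {f : Perm α} :
    f ∈ perfectMatchings U ↔ f ^ 2 = 1 ∧ f.support = U := by
  simp [perfectMatchings]

end PerfectMatchings

variable {ι : Type*} [LinearOrder ι] [Fintype ι]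

/-- The smaller elements of the pairs exchanged by an involution. -/
def leftEnds (f : Perm ι) : Finset ι := {a | a < f a}

theorem mem_leftEnds {f : Perm ι} {a : ι} : a ∈ leftEnds f ↔ a < f a := by
  simp [leftEnds]

theorem leftEnds_subset_support (f : Perm ι) : leftEnds f ⊆ f.support := fun _ ha ↦
  Perm.mem_support.2 (mem_leftEnds.1 ha).ne'

theorem mem_image_leftEnds {f : Perm ι} (hf : f ^ 2 = 1) {a : ι} :
    a ∈ (leftEnds f).image f ↔ f a < a := by
  have hff := apply_apply_of_sq_eq_one hf
  constructor
  · intro h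
    obtain ⟨b, hb, rfl⟩ := mem_image.1 h
    rw [hff]
    exact mem_leftEnds.1 hb
  · intro h
    exact mem_image.2 ⟨f a, mem_leftEnds.2 (by rwa [hff]), hff a⟩

theorem support_eq_leftEnds_union_image {f : Perm ι} (hf : f ^ 2 = 1) :
    f.support = leftEnds f ∪ (leftEnds f).image f := by
  ext a
  rw [mem_union, mem_leftEnds, mem_image_leftEnds hf, Perm.mem_support, ne_comm,
    lt_or_lt_iff_ne]

theorem disjoint_leftEnds_image {f : Perm ι} (hf : f ^ 2 = 1) :
    Disjoint (leftEnds f) ((leftEnds f).image f) := by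
  refine disjoint_left.2 fun a ha ha' ↦ ?_
  exact (mem_leftEnds.1 ha).not_gt ((mem_image_leftEnds hf).1 ha')

theorem prod_support_eq_prod_leftEnds {M : Type*} [CommMonoid M] {f : Perm ι} (hf : f ^ 2 = 1)
    (F : ι → M) : ∏ a ∈ f.support, F a = ∏ a ∈ leftEnds f, F a * F (f a) := by
  rw [support_eq_leftEnds_union_image hf, prod_union (disjoint_leftEnds_image hf),
    prod_image f.injective.injOn, prod_mul_distrib]

theorem card_support_eq_card_leftEnds_mul_two {f : Perm ι} (hf : f ^ 2 = 1) :
    #f.support = #(leftEnds f) * 2 := by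
  rw [support_eq_leftEnds_union_image hf, card_union_of_disjoint (disjoint_leftEnds_image hf),
    card_image_of_injective _ f.injective, mul_two]

/-- The sign of the matching encoded by an involution, which is `-1` to the number of crossings. -/
def matchingSign (f : Perm ι) : ℤˣ :=
  ∏ a ∈ leftEnds f, ∏ c ∈ leftEnds f, crossingSign a (f a) c (f c)

/-- The term contributed to the Pfaffian of `A` by the matching encoded by an involution. -/
def matchingWeight {R : Type*} [CommRing R] (A : Matrix ι ι R) (f : Perm ι) : R :=
  ((matchingSign f : ℤ) : R) * ∏ a ∈ leftEnds f, A a (f a)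

end Matchings

/-! ### Listings of matchings -/

section Listings

variable {m : ℕ}

/-- The position of the first element of the `p`-th pair in a listing of `m` pairs. -/
def pairFst (p : Fin m) : Fin (m * 2) := finProdFinEquiv (p, 0)

/-- The position of the second element of the `p`-th pair in a listing of `m` pairs. -/
def pairSnd (p : Fin m) : Fin (m * 2) := finProdFinEquiv (p, 1)

@[simp]
theorem val_pairFst (p : Fin m) : (pairFst p : ℕ) = 2 * p := by
  simp [pairFst]

@[simp]
theorem val_pairSnd (p : Fin m) : (pairSnd p : ℕ) = 2 * p + 1 := by
  simp [pairSnd, add_comm]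

theorem eq_pairFst_or_eq_pairSnd (i : Fin (m * 2)) :
    (∃ p, i = pairFst p) ∨ ∃ p, i = pairSnd p := by
  obtain ⟨⟨p, j⟩, rfl⟩ := finProdFinEquiv.surjective i
  fin_cases j
  exacts [.inl ⟨p, rfl⟩, .inr ⟨p, rfl⟩]

theorem exists_eq_pairFst_of_even {i : Fin (m * 2)} (hi : (i : ℕ) % 2 = 0) :
    ∃ p, i = pairFst p := by
  refine (eq_pairFst_or_eq_pairSnd i).resolve_right ?_
  rintro ⟨p, rfl⟩
  rw [val_pairSnd] at hi
  omega

theorem prod_pairs {M : Type*} [CommMonoid M] (F : Fin (m * 2) → M) :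
    ∏ i, F i = ∏ p, F (pairFst p) * F (pairSnd p) := by
  rw [← finProdFinEquiv.prod_comp, Fintype.prod_prod_type]
  exact prod_congr rfl fun p _ ↦ Fin.prod_univ_two _

theorem pairFst_lt_pairFst {p q : Fin m} : pairFst p < pairFst q ↔ p < q := by
  rw [Fin.lt_def, Fin.lt_def, val_pairFst, val_pairFst]
  omega

theorem pairFst_lt_pairSnd {p q : Fin m} : pairFst p < pairSnd q ↔ p ≤ q := by
  rw [Fin.lt_def, Fin.le_def, val_pairFst, val_pairSnd]
  omega

theorem pairSnd_lt_pairFst {p q : Fin m} : pairSnd p < pairFst q ↔ p < q := by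
  rw [Fin.lt_def, Fin.lt_def, val_pairFst, val_pairSnd]
  omega

theorem pairSnd_lt_pairSnd {p q : Fin m} : pairSnd p < pairSnd q ↔ p < q := by
  rw [Fin.lt_def, Fin.lt_def, val_pairSnd, val_pairSnd]
  omega

theorem pairFst_ne_pairSnd (p q : Fin m) : pairFst p ≠ pairSnd q := by
  simp [pairFst, pairSnd]

/-- The permutation of positions that exchanges the two elements of every pair of a listing. -/
def pairSwap (m : ℕ) : Perm (Fin (m * 2)) :=
  finProdFinEquiv.permCongr (prodCongrRight fun _ ↦ swap 0 1)

@[simp]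
theorem pairSwap_pairFst (p : Fin m) : pairSwap m (pairFst p) = pairSnd p := by
  simp [pairSwap, pairFst, pairSnd]

@[simp]
theorem pairSwap_pairSnd (p : Fin m) : pairSwap m (pairSnd p) = pairFst p := by
  simp [pairSwap, pairFst, pairSnd]

/-- A sequence lists its pairs in standard form if every pair is increasing and the pairs are
ordered by their first elements. -/
def IsStandardListing {α : Type*} [LinearOrder α] (g : Fin (m * 2) → α) : Prop :=
  (∀ p, g (pairFst p) < g (pairSnd p)) ∧ StrictMono fun p ↦ g (pairFst p)

theorem isStandardListing_iff {α : Type*} [LinearOrder α] {g : Fin (m * 2) → α} :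
    IsStandardListing g ↔
      (∀ i j : Fin (m * 2), (i : ℕ) % 2 = 0 → (j : ℕ) = (i : ℕ) + 1 → g i < g j) ∧
      (∀ i j : Fin (m * 2), (i : ℕ) % 2 = 0 → (j : ℕ) % 2 = 0 → i < j → g i < g j) := by
  constructor
  · rintro ⟨hpair, hmono⟩
    refine ⟨fun i j hi hij ↦ ?_, fun i j hi hj hij ↦ ?_⟩
    · obtain ⟨p, rfl⟩ := exists_eq_pairFst_of_even hi
      obtain rfl : j = pairSnd p := Fin.ext (by simpa using hij)
      exact hpair p
    · obtain ⟨p, rfl⟩ := exists_eq_pairFst_of_even hi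
      obtain ⟨q, rfl⟩ := exists_eq_pairFst_of_even hj
      exact hmono (pairFst_lt_pairFst.1 hij)
  · rintro ⟨hpair, hmono⟩
    exact ⟨fun p ↦ hpair _ _ (by simp) (by simp),
      fun p q hpq ↦ hmono _ _ (by simp) (by simp) (pairFst_lt_pairFst.2 hpq)⟩

theorem sign_eq_of_isStandardListing {σ : Perm (Fin (m * 2))} (hσ : IsStandardListing σ) :
    Perm.sign σ = ∏ p, ∏ q, crossingSign (σ (pairFst p)) (σ (pairSnd p))
      (σ (pairFst q)) (σ (pairSnd q)) := by
  obtain ⟨hpair, hmono⟩ := hσ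
  rw [sign_eq_prod_inversionSign, prod_pairs]
  refine prod_congr rfl fun p _ ↦ ?_
  rw [prod_pairs, prod_pairs, ← prod_mul_distrib]
  refine prod_congr rfl fun q _ ↦ ?_
  simp only [pairFst_lt_pairFst, pairFst_lt_pairSnd, pairSnd_lt_pairFst, pairSnd_lt_pairSnd]
  have hne : pairFst p ≠ pairSnd q := pairFst_ne_pairSnd p q
  rcases lt_trichotomy p q with hpq | rfl | hqp
  · simp only [hpq, hpq.le, if_true]
    rw [inversionSign_arcs (hpair p) (hpair q) (hmono hpq).ne (σ.injective.ne hne)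
      (σ.injective.ne (pairSnd_lt_pairSnd.2 hpq).ne), crossingSign_of_le (hmono hpq).le, mul_one]
  · simp [inversionSign_of_le (hpair p).le, crossingSign_of_le le_rfl]
  · simp [hqp.not_gt, hqp.not_ge, crossingSign_of_le (hmono hqp).le]

section

variable {α : Type*} [DecidableEq α]

/-- The involution that exchanges the two elements of every pair of a listing. -/
def pairInvolution (g : Fin (m * 2) ↪ α) : Perm α := (pairSwap m).viaFintypeEmbedding g

theorem pairInvolution_pairFst (g : Fin (m * 2) ↪ α) (p : Fin m) :
    pairInvolution g (g (pairFst p)) = g (pairSnd p) := by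
  simp [pairInvolution]

theorem pairInvolution_pairSnd (g : Fin (m * 2) ↪ α) (p : Fin m) :
    pairInvolution g (g (pairSnd p)) = g (pairFst p) := by
  simp [pairInvolution]

theorem pairInvolution_of_notMem (g : Fin (m * 2) ↪ α) {x : α} (hx : x ∉ univ.map g) :
    pairInvolution g x = x :=
  Perm.viaFintypeEmbedding_apply_notMem_range _ _ (by simpa using hx)

theorem eq_pairInvolution [Fintype α] {g : Fin (m * 2) ↪ α} {f : Perm α} (hf : f ^ 2 = 1)
    (hsupport : f.support ⊆ univ.map g) (hpair : ∀ p, f (g (pairFst p)) = g (pairSnd p)) :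
    f = pairInvolution g := by
  ext1 x
  by_cases hx : x ∈ univ.map g
  · obtain ⟨i, -, rfl⟩ := mem_map.1 hx
    rcases eq_pairFst_or_eq_pairSnd i with ⟨p, rfl⟩ | ⟨p, rfl⟩
    · rw [hpair, pairInvolution_pairFst]
    · rw [pairInvolution_pairSnd, ← hpair, apply_apply_of_sq_eq_one hf]
  · rw [pairInvolution_of_notMem g hx, Perm.notMem_support.1 fun h ↦ hx (hsupport h)]

theorem pairInvolution_mem_perfectMatchings [Fintype α] (g : Fin (m * 2) ↪ α) :
    pairInvolution g ∈ perfectMatchings (univ.map g) := by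
  refine mem_perfectMatchings.2 ⟨?_, ?_⟩
  · have hswap : pairSwap m ^ 2 = 1 := by
      ext1 i
      rcases eq_pairFst_or_eq_pairSnd i with ⟨p, rfl⟩ | ⟨p, rfl⟩ <;> simp [sq]
    rw [pairInvolution, Perm.viaFintypeEmbedding, ← Perm.extendDomain_pow, hswap,
      Perm.extendDomain_one]
  · ext x
    rw [Perm.mem_support]
    by_cases hx : x ∈ univ.map g
    · obtain ⟨i, -, rfl⟩ := mem_map.1 hx
      rcases eq_pairFst_or_eq_pairSnd i with ⟨p, rfl⟩ | ⟨p, rfl⟩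
      · simp [pairInvolution_pairFst, (pairFst_ne_pairSnd p p).symm]
      · simp [pairInvolution_pairSnd, pairFst_ne_pairSnd p p]
    · simp only [pairInvolution_of_notMem g hx, ne_eq, not_true, hx]

end

variable {ι : Type*} [LinearOrder ι]

theorem lt_pairInvolution_iff {g : Fin (m * 2) ↪ ι} (hg : IsStandardListing g) {x : ι} :
    x < pairInvolution g x ↔ ∃ p, g (pairFst p) = x := by
  by_cases hx : x ∈ univ.map g
  · obtain ⟨i, -, rfl⟩ := mem_map.1 hx
    rcases eq_pairFst_or_eq_pairSnd i with ⟨p, rfl⟩ | ⟨p, rfl⟩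
    · simp [pairInvolution_pairFst, hg.1 p]
    · simp [pairInvolution_pairSnd, (hg.1 p).le, pairFst_ne_pairSnd]
  · rw [pairInvolution_of_notMem g hx]
    simp only [lt_irrefl, false_iff]
    rintro ⟨p, rfl⟩
    exact hx (mem_map_of_mem g (mem_univ _))

theorem pairInvolution_injOn :
    {g : Fin (m * 2) ↪ ι | IsStandardListing g}.InjOn pairInvolution := by
  intro g hg h hh hgh
  -- In a standard listing, the first elements are the `x` with `x < f x`, in increasing order.
  have hfst (p : Fin m) : g (pairFst p) = h (pairFst p) := by
    refine congrFun ((hg.2.range_inj hh.2).1 (Set.ext fun x ↦ ?_)) p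
    rw [Set.mem_range, Set.mem_range, ← lt_pairInvolution_iff hg, hgh, lt_pairInvolution_iff hh]
  ext i
  rcases eq_pairFst_or_eq_pairSnd i with ⟨p, rfl⟩ | ⟨p, rfl⟩
  · exact hfst p
  · rw [← pairInvolution_pairFst, ← pairInvolution_pairFst, hgh, hfst]

variable [Fintype ι]

theorem leftEnds_pairInvolution {g : Fin (m * 2) ↪ ι} (hg : IsStandardListing g) :
    leftEnds (pairInvolution g) = univ.image fun p ↦ g (pairFst p) := by
  ext x
  simp [mem_leftEnds, lt_pairInvolution_iff hg]

theorem exists_isStandardListing {f : Perm ι} (hf : f ^ 2 = 1) (hcard : #(leftEnds f) = m) :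
    ∃ g : Fin (m * 2) ↪ ι, IsStandardListing g ∧ pairInvolution g = f := by
  let a : Fin m ↪o ι := (leftEnds f).orderEmbOfFin hcard
  have ha (p) : a p ∈ leftEnds f := orderEmbOfFin_mem _ _ _
  have hne (p q) : a p ≠ f (a q) := fun h ↦
    disjoint_left.1 (disjoint_leftEnds_image hf) (ha p) (h ▸ mem_image_of_mem f (ha q))
  let listing : Fin m × Fin 2 → ι := fun x ↦ ![a x.1, f (a x.1)] x.2
  have hinj : listing.Injective := by
    rintro ⟨p, i⟩ ⟨q, j⟩ h
    fin_cases i <;> fin_cases j <;> simp_all [listing, (hne _ _).symm]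
  let g : Fin (m * 2) ↪ ι := finProdFinEquiv.symm.toEmbedding.trans ⟨listing, hinj⟩
  have hfst (p) : g (pairFst p) = a p := by simp [g, pairFst, listing]
  have hsnd (p) : g (pairSnd p) = f (a p) := by simp [g, pairSnd, listing]
  refine ⟨g, ⟨fun p ↦ ?_, fun p q hpq ↦ ?_⟩, (eq_pairInvolution hf ?_ fun p ↦ ?_).symm⟩
  · rw [hfst, hsnd]
    exact mem_leftEnds.1 (ha p)
  · simpa only [hfst] using a.strictMono hpq
  · have hleft : leftEnds f = univ.map a.toEmbedding := by simp [a]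
    rw [support_eq_leftEnds_union_image hf, hleft]
    refine union_subset ?_ ?_ <;> simp only [subset_iff, mem_image, mem_map, mem_univ, true_and]
    · rintro _ ⟨p, rfl⟩
      exact ⟨pairFst p, hfst p⟩
    · rintro _ ⟨_, ⟨p, rfl⟩, rfl⟩
      exact ⟨pairSnd p, hsnd p⟩
  · rw [hfst, hsnd]

theorem exists_perm_trans_eq {α β : Type*} [Fintype α] {e g : α ↪ β}
    (h : univ.map g ⊆ univ.map e) : ∃ σ : Perm α, σ.toEmbedding.trans e = g := by
  choose s hs using fun i ↦ mem_map.1 (h (mem_map_of_mem g (mem_univ i)))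
  have hinj : s.Injective := fun i j hij ↦ g.injective (by rw [← (hs i).2, ← (hs j).2, hij])
  exact ⟨.ofBijective s (Finite.injective_iff_bijective.1 hinj), DFunLike.ext _ _ fun i ↦ (hs i).2⟩

theorem matchingWeight_pairInvolution {R : Type*} [CommRing R] (A : Matrix ι ι R)
    (e : Fin (m * 2) ↪o ι) {σ : Perm (Fin (m * 2))} (hσ : IsStandardListing σ) :
    matchingWeight A (pairInvolution (σ.toEmbedding.trans e.toEmbedding)) =
      ((Perm.sign σ : ℤ) : R) * ∏ p, A (e (σ (pairFst p))) (e (σ (pairSnd p))) := by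
  set g := σ.toEmbedding.trans e.toEmbedding
  have hg (i) : g i = e (σ i) := rfl
  have hstandard : IsStandardListing g :=
    ⟨fun p ↦ e.strictMono (hσ.1 p), e.strictMono.comp hσ.2⟩
  have hinj : Set.InjOn (fun p ↦ g (pairFst p)) (univ : Finset (Fin m)) :=
    hstandard.2.injective.injOn
  simp only [matchingWeight, matchingSign, leftEnds_pairInvolution hstandard, prod_image hinj,
    pairInvolution_pairFst]
  simp only [hg, crossingSign, e.lt_iff_lt, sign_eq_of_isStandardListing hσ]

end Listings

/-! ### Pfaffians as sums over matchings -/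

section Pfaffian

theorem prod_dite_even_eq_prod_pairs {M : Type*} [CommMonoid M] {m : ℕ}
    (F : Fin (m * 2) → Fin (m * 2) → M) :
    ∏ i : Fin (m * 2), (if h : (i : ℕ) % 2 = 0 ∧ (i : ℕ) + 1 < m * 2 then
      F i ⟨(i : ℕ) + 1, h.2⟩ else 1) = ∏ p : Fin m, F (pairFst p) (pairSnd p) := by
  rw [prod_pairs]
  refine prod_congr rfl fun p _ ↦ ?_
  have hlt : 2 * (p : ℕ) + 1 < m * 2 := by omega
  have hsnd : (⟨2 * (p : ℕ) + 1, hlt⟩ : Fin (m * 2)) = pairSnd p := Fin.ext (by simp)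
  simp [hlt, hsnd]

variable {K : Type*} [Field K]

theorem pfaffian_eq_sum_isStandardListing {m : ℕ} (A : Matrix (Fin (m * 2)) (Fin (m * 2)) K)
    [DecidablePred fun σ : Perm (Fin (m * 2)) ↦ IsStandardListing σ] :
    pfaffian A = ∑ σ ∈ univ.filter fun σ : Perm (Fin (m * 2)) ↦ IsStandardListing σ,
      ((Perm.sign σ : ℤ) : K) * ∏ p, A (σ (pairFst p)) (σ (pairSnd p)) := by
  rw [pfaffian, if_pos (even_two.mul_left m)]
  refine sum_congr (filter_congr fun σ _ ↦ isStandardListing_iff.symm) fun σ _ ↦ ?_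
  rw [prod_dite_even_eq_prod_pairs fun i j ↦ A (σ i) (σ j)]

variable {ι : Type*} [LinearOrder ι] [Fintype ι]

theorem pfaffian_submatrix_eq_sum_matchingWeight_of_even {m : ℕ} (A : Matrix ι ι K)
    (e : Fin (m * 2) ↪o ι) :
    pfaffian (A.submatrix e e) =
      ∑ f ∈ perfectMatchings (univ.map e.toEmbedding), matchingWeight A f := by
  classical
  rw [pfaffian_eq_sum_isStandardListing]
  have hmap (σ : Perm (Fin (m * 2))) :
      univ.map (σ.toEmbedding.trans e.toEmbedding) = univ.map e.toEmbedding := by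
    rw [← Finset.map_map, map_univ_equiv]
  have hstandard {σ : Perm (Fin (m * 2))} :
      IsStandardListing (σ.toEmbedding.trans e.toEmbedding) ↔ IsStandardListing σ := by
    simp [IsStandardListing, StrictMono]
  refine sum_bij (fun σ _ ↦ pairInvolution (σ.toEmbedding.trans e.toEmbedding)) (fun σ _ ↦ ?_)
    (fun σ hσ τ hτ h ↦ ?_) (fun f hf ↦ ?_) (fun σ hσ ↦ ?_)
  · exact hmap σ ▸ pairInvolution_mem_perfectMatchings _
  · have hστ := pairInvolution_injOn (hstandard.2 (mem_filter.1 hσ).2)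
      (hstandard.2 (mem_filter.1 hτ).2) h
    exact Equiv.ext fun i ↦ e.injective (DFunLike.congr_fun hστ i)
  · obtain ⟨hsq, hsupport⟩ := mem_perfectMatchings.1 hf
    have hcard : #(leftEnds f) = m := by
      have := card_support_eq_card_leftEnds_mul_two hsq
      rw [hsupport, card_map, card_univ, Fintype.card_fin] at this
      omega
    obtain ⟨g, hg, rfl⟩ := exists_isStandardListing hsq hcard
    have hrange : univ.map g = univ.map e.toEmbedding :=
      (mem_perfectMatchings.1 (pairInvolution_mem_perfectMatchings g)).2.symm.trans hsupport
    obtain ⟨σ, rfl⟩ := exists_perm_trans_eq hrange.le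
    exact ⟨σ, mem_filter.2 ⟨mem_univ σ, hstandard.1 hg⟩, rfl⟩
  · exact (matchingWeight_pairInvolution A e (mem_filter.1 hσ).2).symm

theorem perfectMatchings_of_odd {U : Finset ι} (hU : Odd #U) : perfectMatchings U = ∅ := by
  refine eq_empty_of_forall_notMem fun f hf ↦ Nat.not_even_iff_odd.2 hU ?_
  obtain ⟨hsq, rfl⟩ := mem_perfectMatchings.1 hf
  rw [card_support_eq_card_leftEnds_mul_two hsq]
  exact even_two.mul_left _

theorem pfaffian_submatrix_eq_sum_matchingWeight {n : ℕ} (A : Matrix ι ι K) (e : Fin n ↪o ι) :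
    pfaffian (A.submatrix e e) =
      ∑ f ∈ perfectMatchings (univ.map e.toEmbedding), matchingWeight A f := by
  by_cases hn : Even n
  · obtain ⟨m, rfl⟩ := exists_eq_mul_left_of_dvd hn.two_dvd
    exact pfaffian_submatrix_eq_sum_matchingWeight_of_even A e
  · rw [perfectMatchings_of_odd (by simpa using hn), sum_empty, pfaffian, if_neg hn]

theorem pfSub_eq_sum_matchingWeight (A : Matrix ι ι K) (U : Finset ι) :
    pfSub A U = ∑ f ∈ perfectMatchings U, matchingWeight A f := by
  refine (pfaffian_submatrix_eq_sum_matchingWeight A (U.orderEmbOfFin rfl)).trans ?_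
  rw [map_orderEmbOfFin_univ]

theorem pfaffian_eq_pfSub_univ {n : ℕ} (A : Matrix (Fin n) (Fin n) K) :
    pfaffian A = pfSub A univ := by
  rw [pfSub_eq_sum_matchingWeight]
  have := pfaffian_submatrix_eq_sum_matchingWeight A (OrderIso.refl (Fin n)).toOrderEmbedding
  simpa using this

end Pfaffian

/-! ### Unions of matchings -/

section Unions

theorem mul_apply_of_apply_ne {α : Type*} {f g : Perm α} (h : f.Disjoint g) {a : α}
    (ha : f a ≠ a) : (f * g) a = f a := by
  rw [Perm.mul_apply, (h a).resolve_left ha]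

section SplitMatchings

variable {α : Type*} [DecidableEq α] [Fintype α]

theorem mul_mem_perfectMatchings {f g : Perm α} (hf : f ^ 2 = 1) (hg : g ^ 2 = 1)
    (h : f.Disjoint g) : f * g ∈ perfectMatchings (f.support ∪ g.support) :=
  mem_perfectMatchings.2 ⟨by rw [h.commute.mul_pow, hf, hg, one_mul], h.support_mul⟩

/-- The pairs of disjoint matchings that together cover `W`. -/
def splitMatchings (W : Finset α) : Finset (Perm α × Perm α) :=
  {x | x.1 ^ 2 = 1 ∧ x.2 ^ 2 = 1 ∧ Disjoint x.1.support x.2.support ∧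
    x.1.support ∪ x.2.support = W}

theorem mem_splitMatchings {W : Finset α} {x : Perm α × Perm α} :
    x ∈ splitMatchings W ↔
      x.1 ^ 2 = 1 ∧ x.2 ^ 2 = 1 ∧ x.1.Disjoint x.2 ∧ x.1.support ∪ x.2.support = W := by
  simp [splitMatchings, Perm.disjoint_iff_disjoint_support]

theorem sum_powerset_perfectMatchings {M : Type*} [AddCommMonoid M] (W : Finset α)
    (F : Perm α → Perm α → M) :
    ∑ U ∈ W.powerset, ∑ f ∈ perfectMatchings U, ∑ g ∈ perfectMatchings (W \ U), F f g =
      ∑ x ∈ splitMatchings W, F x.1 x.2 := by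
  simp only [← sum_product', sum_sigma']
  refine sum_nbij' (fun x ↦ x.2) (fun x ↦ ⟨x.1.support, x⟩) ?_ ?_ ?_ (fun _ _ ↦ rfl)
    (fun _ _ ↦ rfl)
  · rintro ⟨U, f, g⟩ hx
    simp only [mem_sigma, mem_powerset, mem_product, mem_perfectMatchings] at hx
    obtain ⟨hU, ⟨hf, rfl⟩, hg, hgU⟩ := hx
    simp only [mem_splitMatchings, Perm.disjoint_iff_disjoint_support, hgU]
    exact ⟨hf, hg, disjoint_sdiff, union_sdiff_of_subset hU⟩
  · rintro ⟨f, g⟩ hx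
    obtain ⟨hf, hg, hfg, rfl⟩ := mem_splitMatchings.1 hx
    rw [mem_sigma, mem_powerset, union_sdiff_cancel_left hfg.disjoint_support, mem_product,
      mem_perfectMatchings, mem_perfectMatchings]
    exact ⟨subset_union_left, ⟨hf, rfl⟩, hg, rfl⟩
  · rintro ⟨U, f, g⟩ hx
    simp only [mem_sigma, mem_product, mem_perfectMatchings] at hx
    obtain ⟨-, ⟨-, rfl⟩, -⟩ := hx
    rfl

end SplitMatchings

variable {ι : Type*} [LinearOrder ι] [Fintype ι] {f g : Perm ι}

theorem disjoint_leftEnds (h : f.Disjoint g) : Disjoint (leftEnds f) (leftEnds g) :=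
  h.disjoint_support.mono (leftEnds_subset_support f) (leftEnds_subset_support g)

theorem leftEnds_mul (h : f.Disjoint g) : leftEnds (f * g) = leftEnds f ∪ leftEnds g := by
  ext a
  rw [mem_union, mem_leftEnds, mem_leftEnds, mem_leftEnds]
  rcases h a with ha | ha
  · rw [h.commute.eq, Perm.mul_apply, ha]
    simp
  · rw [Perm.mul_apply, ha]
    simp

theorem prod_leftEnds_mul {M : Type*} [CommMonoid M] (h : f.Disjoint g) (F : ι → ι → M) :
    ∏ a ∈ leftEnds (f * g), F a ((f * g) a) =
      (∏ a ∈ leftEnds f, F a (f a)) * ∏ a ∈ leftEnds g, F a (g a) := by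
  rw [leftEnds_mul h, prod_union (disjoint_leftEnds h)]
  congr 1 <;> refine prod_congr rfl fun a ha ↦ ?_
  · rw [mul_apply_of_apply_ne h (mem_leftEnds.1 ha).ne']
  · rw [h.commute.eq, mul_apply_of_apply_ne h.symm (mem_leftEnds.1 ha).ne']

theorem shuffleSign_support (hf : f ^ 2 = 1) (hg : g ^ 2 = 1) (h : f.Disjoint g) :
    shuffleSign f.support g.support =
      (∏ a ∈ leftEnds f, ∏ c ∈ leftEnds g, crossingSign a (f a) c (g c)) *
        ∏ c ∈ leftEnds g, ∏ a ∈ leftEnds f, crossingSign c (g c) a (f a) := by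
  rw [shuffleSign, prod_support_eq_prod_leftEnds hf, prod_comm (s := leftEnds g),
    ← prod_mul_distrib]
  refine prod_congr rfl fun a ha ↦ ?_
  rw [prod_support_eq_prod_leftEnds hg, prod_support_eq_prod_leftEnds hg, ← prod_mul_distrib,
    ← prod_mul_distrib]
  refine prod_congr rfl fun c hc ↦ ?_
  have hne {x y : ι} (hx : x ∈ f.support) (hy : y ∈ g.support) : x ≠ y :=
    disjoint_iff_ne.1 h.disjoint_support x hx y hy
  have ha' := leftEnds_subset_support f ha
  have hc' := leftEnds_subset_support g hc
  exact inversionSign_arcs (mem_leftEnds.1 ha) (mem_leftEnds.1 hc) (hne ha' hc')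
    (hne ha' (Perm.apply_mem_support.2 hc'))
    (hne (Perm.apply_mem_support.2 ha') (Perm.apply_mem_support.2 hc'))

theorem matchingSign_mul (hf : f ^ 2 = 1) (hg : g ^ 2 = 1) (h : f.Disjoint g) :
    matchingSign (f * g) =
      shuffleSign f.support g.support * (matchingSign f * matchingSign g) := by
  unfold matchingSign
  rw [prod_leftEnds_mul h fun a b ↦ ∏ c ∈ leftEnds (f * g), crossingSign a b c ((f * g) c)]
  simp only [prod_leftEnds_mul h (crossingSign _ _), prod_mul_distrib, shuffleSign_support hf hg h]
  ac_rfl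

theorem shuffleSign_mul_matchingWeight_mul_matchingWeight {R : Type*} [CommRing R]
    (A₁ A₂ : Matrix ι ι R) (hf : f ^ 2 = 1) (hg : g ^ 2 = 1) (h : f.Disjoint g) :
    ((shuffleSign f.support g.support : ℤ) : R) * (matchingWeight A₁ f * matchingWeight A₂ g) =
      ((matchingSign (f * g) : ℤ) : R) * ((∏ a ∈ leftEnds f, A₁ a ((f * g) a)) *
        ∏ a ∈ leftEnds (f * g) \ leftEnds f, A₂ a ((f * g) a)) := by
  have hleft : leftEnds (f * g) \ leftEnds f = leftEnds g := by
    rw [leftEnds_mul h, union_sdiff_cancel_left (disjoint_leftEnds h)]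
  have h₁ : ∏ a ∈ leftEnds f, A₁ a ((f * g) a) = ∏ a ∈ leftEnds f, A₁ a (f a) :=
    prod_congr rfl fun a ha ↦ by
      rw [mul_apply_of_apply_ne h (mem_leftEnds.1 ha).ne']
  have h₂ : ∏ a ∈ leftEnds g, A₂ a ((f * g) a) = ∏ a ∈ leftEnds g, A₂ a (g a) :=
    prod_congr rfl fun a ha ↦ by
      rw [h.commute.eq, mul_apply_of_apply_ne h.symm (mem_leftEnds.1 ha).ne']
  rw [hleft, h₁, h₂, matchingSign_mul hf hg h, matchingWeight, matchingWeight]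
  push_cast
  ring

theorem eq_of_eqOn_leftEnds (hf : f ^ 2 = 1) (hg : g ^ 2 = 1) (hleft : leftEnds f = leftEnds g)
    (h : ∀ a ∈ leftEnds f, f a = g a) : f = g := by
  have hsupport : f.support = g.support := by
    rw [support_eq_leftEnds_union_image hf, support_eq_leftEnds_union_image hg, ← hleft,
      image_congr h]
  ext1 a
  by_cases ha : a ∈ f.support
  · rw [support_eq_leftEnds_union_image hf, mem_union, mem_image] at ha
    rcases ha with ha | ⟨b, hb, rfl⟩
    · exact h a ha
    · rw [apply_apply_of_sq_eq_one hf, h b hb, apply_apply_of_sq_eq_one hg]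
  · rw [Perm.notMem_support.1 ha, Perm.notMem_support.1 (hsupport ▸ ha)]

theorem exists_mul_eq_of_subset_leftEnds {h : Perm ι} (hh : h ^ 2 = 1) {t : Finset ι}
    (ht : t ⊆ leftEnds h) : ∃ f g : Perm ι,
      f ^ 2 = 1 ∧ g ^ 2 = 1 ∧ f.Disjoint g ∧ f * g = h ∧ leftEnds f = t := by
  have hhh := apply_apply_of_sq_eq_one hh
  have hf : (fun a ↦ if a ∈ t ∨ h a ∈ t then h a else a).Involutive := fun a ↦ by grind
  have hg : (fun a ↦ if a ∈ t ∨ h a ∈ t then a else h a).Involutive := fun a ↦ by grind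
  refine ⟨hf.toPerm, hg.toPerm, Equiv.ext fun a ↦ ?_, Equiv.ext fun a ↦ ?_, fun a ↦ ?_,
    Equiv.ext fun a ↦ ?_, ?_⟩
  · rw [sq]
    exact hf a
  · rw [sq]
    exact hg a
  · simp only [Function.Involutive.coe_toPerm]
    grind
  · simp only [Perm.mul_apply, Function.Involutive.coe_toPerm]
    grind
  · ext a
    have hlt := fun b (hb : b ∈ t) ↦ mem_leftEnds.1 (ht hb)
    rw [mem_leftEnds, Function.Involutive.coe_toPerm]
    grind

theorem matchingWeight_add {R : Type*} [CommRing R] (A₁ A₂ : Matrix ι ι R) (h : Perm ι) :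
    matchingWeight (A₁ + A₂) h = ∑ t ∈ (leftEnds h).powerset, ((matchingSign h : ℤ) : R) *
      ((∏ a ∈ t, A₁ a (h a)) * ∏ a ∈ leftEnds h \ t, A₂ a (h a)) := by
  simp only [matchingWeight, Matrix.add_apply, prod_add, mul_sum]

theorem sum_perfectMatchings_powerset {M : Type*} [AddCommMonoid M] (W : Finset ι)
    (F : Perm ι → Finset ι → M) :
    ∑ h ∈ perfectMatchings W, ∑ t ∈ (leftEnds h).powerset, F h t =
      ∑ x ∈ splitMatchings W, F (x.1 * x.2) (leftEnds x.1) := by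
  rw [sum_sigma']
  symm
  refine sum_nbij (fun x ↦ ⟨x.1 * x.2, leftEnds x.1⟩) ?_ ?_ ?_ fun _ _ ↦ rfl
  · rintro ⟨f, g⟩ hx
    obtain ⟨hf, hg, hfg, rfl⟩ := mem_splitMatchings.1 hx
    rw [mem_sigma, mem_powerset, leftEnds_mul hfg]
    exact ⟨mul_mem_perfectMatchings hf hg hfg, subset_union_left⟩
  · rintro ⟨f, g⟩ hx ⟨f', g'⟩ hx' h
    obtain ⟨hf, -, hfg, -⟩ := mem_splitMatchings.1 hx
    obtain ⟨hf', -, hfg', -⟩ := mem_splitMatchings.1 hx'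
    obtain ⟨hmul, hleft⟩ : f * g = f' * g' ∧ leftEnds f = leftEnds f' := by simpa using h
    obtain rfl : f = f' := eq_of_eqOn_leftEnds hf hf' hleft fun a ha ↦ by
      rw [← mul_apply_of_apply_ne hfg (mem_leftEnds.1 ha).ne', hmul,
        mul_apply_of_apply_ne hfg' (mem_leftEnds.1 (hleft ▸ ha)).ne']
    rw [mul_left_cancel hmul]
  · rintro ⟨h, t⟩ hx
    rw [mem_coe, mem_sigma, mem_powerset, mem_perfectMatchings] at hx
    obtain ⟨⟨hh, hW⟩, ht⟩ := hx
    obtain ⟨f, g, hf, hg, hfg, rfl, rfl⟩ := exists_mul_eq_of_subset_leftEnds hh ht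
    exact ⟨(f, g), mem_splitMatchings.2 ⟨hf, hg, hfg, hfg.support_mul ▸ hW⟩, rfl⟩

theorem sum_matchingWeight_add {R : Type*} [CommRing R] (A₁ A₂ : Matrix ι ι R) (W : Finset ι) :
    ∑ h ∈ perfectMatchings W, matchingWeight (A₁ + A₂) h =
      ∑ U ∈ W.powerset, ((shuffleSign U (W \ U) : ℤ) : R) *
        (∑ f ∈ perfectMatchings U, matchingWeight A₁ f) *
          ∑ g ∈ perfectMatchings (W \ U), matchingWeight A₂ g := by
  have hterm (U : Finset ι) : ((shuffleSign U (W \ U) : ℤ) : R) *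
        (∑ f ∈ perfectMatchings U, matchingWeight A₁ f) *
          ∑ g ∈ perfectMatchings (W \ U), matchingWeight A₂ g =
      ∑ f ∈ perfectMatchings U, ∑ g ∈ perfectMatchings (W \ U),
        ((shuffleSign f.support g.support : ℤ) : R) *
          (matchingWeight A₁ f * matchingWeight A₂ g) := by
    rw [mul_assoc, sum_mul_sum, mul_sum]
    refine sum_congr rfl fun f hf ↦ ?_
    rw [mul_sum]
    refine sum_congr rfl fun g hg ↦ ?_
    rw [(mem_perfectMatchings.1 hf).2, (mem_perfectMatchings.1 hg).2]
  simp only [matchingWeight_add, hterm]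
  rw [sum_perfectMatchings_powerset W fun h t ↦ ((matchingSign h : ℤ) : R) *
    ((∏ a ∈ t, A₁ a (h a)) * ∏ a ∈ leftEnds h \ t, A₂ a (h a)), sum_powerset_perfectMatchings]
  refine sum_congr rfl fun x hx ↦ ?_
  obtain ⟨hf, hg, hfg, -⟩ := mem_splitMatchings.1 hx
  exact (shuffleSign_mul_matchingWeight_mul_matchingWeight A₁ A₂ hf hg hfg).symm

end Unions

theorem pfSub_add {ι : Type*} [LinearOrder ι] [Finite ι] {K : Type*} [Field K]
    (A₁ A₂ : Matrix ι ι K) (W : Finset ι) :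
    pfSub (A₁ + A₂) W =
      ∑ U ∈ W.powerset, ((shuffleSign U (W \ U) : ℤ) : K) * pfSub A₁ U * pfSub A₂ (W \ U) := by
  cases nonempty_fintype ι
  simp only [pfSub_eq_sum_matchingWeight, sum_matchingWeight_add]

/-! ### The sign of a split -/

theorem prod_orderEmbOfFin {α M : Type*} [LinearOrder α] [CommMonoid M] (s : Finset α)
    (F : α → M) : ∏ i, F (s.orderEmbOfFin rfl i) = ∏ a ∈ s, F a := by
  conv_rhs => rw [← map_orderEmbOfFin_univ s rfl]
  rw [prod_map]
  rfl

theorem sign_splitPerm {N : ℕ} (U : Finset (Fin N)) :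
    Perm.sign (splitPerm U) = shuffleSign U Uᶜ := by
  let e : Fin #U ⊕ Fin #Uᶜ ≃ Fin N := finSumFinEquiv.trans (finCongr (by simp))
  have hleft (i) : splitPerm U (e (.inl i)) = U.orderEmbOfFin rfl i := by simp [splitPerm, e]
  have hright (j) : splitPerm U (e (.inr j)) = Uᶜ.orderEmbOfFin rfl j := by simp [splitPerm, e]
  have hval_left (i) : (e (.inl i) : ℕ) = i := by simp [e]
  have hval_right (j) : (e (.inr j) : ℕ) = #U + j := by simp [e]
  have hll (i i') : e (.inl i) < e (.inl i') ↔ i < i' := by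
    rw [Fin.lt_def, Fin.lt_def, hval_left, hval_left]
  have hrr (j j') : e (.inr j) < e (.inr j') ↔ j < j' := by
    rw [Fin.lt_def, Fin.lt_def, hval_right, hval_right, add_lt_add_iff_left]
  have hlr (i j) : e (.inl i) < e (.inr j) := by
    rw [Fin.lt_def, hval_left, hval_right]
    omega
  -- Both halves are increasing, so inversions occur only between an element of `U` and one of `Uᶜ`.
  have hincr {k : ℕ} (φ : Fin k ↪o Fin N) (i i' : Fin k) :
      (if i < i' then inversionSign (φ i) (φ i') else 1) = 1 :=
    ite_eq_right_iff.2 fun h ↦ inversionSign_of_le (φ.monotone h.le)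
  rw [sign_eq_prod_inversionSign, ← e.prod_comp]
  simp only [← e.prod_comp, Fintype.prod_sum_type, hleft, hright, hll, hrr, hlr, (hlr _ _).not_gt,
    hincr, if_true, if_false, prod_const_one, one_mul, mul_one, prod_orderEmbOfFin, shuffleSign]
  rw [prod_orderEmbOfFin U fun u ↦ ∏ v ∈ Uᶜ, inversionSign u v]

theorem pfaffian_add_general {N : ℕ} {K : Type*} [Field K] (A₁ A₂ : Matrix (Fin N) (Fin N) K) :
    pfaffian (A₁ + A₂) = ∑ U : Finset (Fin N),
      ((Perm.sign (splitPerm U) : ℤ) : K) * pfSub A₁ U * pfSub A₂ Uᶜ := by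
  rw [pfaffian_eq_pfSub_univ, pfSub_add, powerset_univ]
  simp only [sign_splitPerm, compl_eq_univ_sdiff]

end

/-- Pfaffian of a sum of two skew-symmetric matrices:
`Pf (A₁ + A₂) = Σ_U σ_U · Pf A₁[U] · Pf A₂[V ∖ U]`. -/
theorem pfaffian_add {N : ℕ} {K : Type*} [Field K] (hN : Even N)
    (A₁ A₂ : Matrix (Fin N) (Fin N) K)
    (h₁ : A₁ᵀ = -A₁) (h₁d : ∀ i, A₁ i i = 0)
    (h₂ : A₂ᵀ = -A₂) (h₂d : ∀ i, A₂ i i = 0) :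
    pfaffian (A₁ + A₂) =
      ∑ U : Finset (Fin N),
        ((Equiv.Perm.sign (splitPerm U) : ℤ) : K) * pfSub A₁ U * pfSub A₂ Uᶜ :=
  pfaffian_add_general A₁ A₂
end
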